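/- arXiv:1701.05150 — 2 statements merged into one kernel-verified Lean document; each statement's English description precedes it below -/
import Mathlib

section
/- Let n ≥ 1 be an integer and I ⊆ ℝ an interval. Let H, L, ρ : I → ℝ be functions such that: H is differentiable with H(t) < 0 for all t ∈ I; ρ is differentiable with ρ(t) > 0 and ρ'(t) = −L(t)·H(t)·ρ(t) for all t ∈ I; and 0 ≤ L(t) ≤ (n/H(t)²)·H'(t) for all t ∈ I. Then the function t ↦ (−H(t))ⁿ·ρ(t) is nonincreasing (antitone) on I. -/
open Set Filter

/-! The logarithmic derivative of `(-H) ^ p * ρ` is `p * H' / H - L * H = H * (p / H ^ 2 * H' - L)`: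
a negative factor times one that the upper bound on `L` makes nonnegative. -/

theorem hasDerivWithinAt_rpow_const_mul {u ρ : ℝ → ℝ} {u' r t : ℝ} {s : Set ℝ} (p : ℝ)
    (hu : HasDerivWithinAt u u' s t) (hut : u t ≠ 0)
    (hρ : HasDerivWithinAt ρ (r * ρ t) s t) :
    HasDerivWithinAt (fun x => u x ^ p * ρ x) ((p * u' / u t + r) * (u t ^ p * ρ t)) s t := by
  refine ((hu.rpow_const (Or.inl hut)).fun_mul hρ).congr_deriv ?_
  rw [Real.rpow_sub_one hut]
  ring

theorem antitoneOn_of_hasDerivWithinAt_mul_self {D : Set ℝ} (hD : Convex ℝ D) {f a : ℝ → ℝ}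
    (hf : ContinuousOn f D)
    (hf' : ∀ t ∈ interior D, HasDerivWithinAt f (a t * f t) (interior D) t)
    (ha : ∀ t ∈ interior D, a t ≤ 0) (hf₀ : ∀ t ∈ interior D, 0 ≤ f t) :
    AntitoneOn f D :=
  antitoneOn_of_hasDerivWithinAt_nonpos hD hf hf' fun t ht =>
    mul_nonpos_of_nonpos_of_nonneg (ha t ht) (hf₀ t ht)

theorem pointwise_normalized_volume_antitone_general
    {p : ℝ} {I : Set ℝ} (hI : I.OrdConnected) {H H' L ρ : ℝ → ℝ}
    (hHderiv : ∀ t ∈ I, HasDerivWithinAt H (H' t) I t)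
    (hHneg : ∀ t ∈ I, H t < 0)
    (hρnonneg : ∀ t ∈ I, 0 ≤ ρ t)
    (hρderiv : ∀ t ∈ I, HasDerivWithinAt ρ (-(L t) * H t * ρ t) I t)
    (hL : ∀ t ∈ I, L t ≤ p / H t ^ 2 * H' t) :
    AntitoneOn (fun t => (-(H t)) ^ p * ρ t) I := by
  have hderiv : ∀ t ∈ I, HasDerivWithinAt (fun t => (-(H t)) ^ p * ρ t)
      ((p * -H' t / -H t + -(L t) * H t) * ((-(H t)) ^ p * ρ t)) I t := fun t ht =>
    hasDerivWithinAt_rpow_const_mul p (hHderiv t ht).fun_neg (neg_ne_zero.mpr (hHneg t ht).ne)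
      (hρderiv t ht)
  have hrate : ∀ t ∈ I, p * -H' t / -H t + -(L t) * H t ≤ 0 := fun t ht => by
    have hH : H t ≠ 0 := (hHneg t ht).ne
    calc p * -H' t / -H t + -(L t) * H t = H t * (p / H t ^ 2 * H' t - L t) := by
          field_simp
          ring
      _ ≤ 0 := mul_nonpos_of_nonpos_of_nonneg (hHneg t ht).le (sub_nonneg.mpr (hL t ht))
  have hnonneg : ∀ t ∈ I, 0 ≤ (-(H t)) ^ p * ρ t := fun t ht =>
    mul_nonneg (Real.rpow_nonneg (neg_nonneg.mpr (hHneg t ht).le) p) (hρnonneg t ht)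
  exact antitoneOn_of_hasDerivWithinAt_mul_self hI.convex
    (fun t ht => (hderiv t ht).continuousWithinAt)
    (fun t ht => (hderiv t (interior_subset ht)).mono interior_subset)
    (fun t ht => hrate t (interior_subset ht)) (fun t ht => hnonneg t (interior_subset ht))

/-- Pointwise Fischer–Moncrief volume monotonicity: if `H < 0`, `ρ > 0` evolves by
`ρ' = -L·H·ρ`, and `0 ≤ L ≤ (n/H²)·H'` on an interval `I`, then `(-H)ⁿ·ρ` is
nonincreasing on `I`. -/
theorem pointwise_normalized_volume_antitone
    (n : ℕ) (hn : 1 ≤ n) (I : Set ℝ) (hI : I.OrdConnected)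
    (H H' L ρ : ℝ → ℝ)
    (hHderiv : ∀ t ∈ I, HasDerivWithinAt H (H' t) I t)
    (hHneg : ∀ t ∈ I, H t < 0)
    (hρpos : ∀ t ∈ I, 0 < ρ t)
    (hρderiv : ∀ t ∈ I, HasDerivWithinAt ρ (-(L t) * H t * ρ t) I t)
    (hL0 : ∀ t ∈ I, 0 ≤ L t)
    (hL1 : ∀ t ∈ I, L t ≤ ((n : ℝ) / (H t) ^ 2) * H' t) :
    AntitoneOn (fun t => (-(H t)) ^ n * ρ t) I := by
  simpa only [Real.rpow_natCast] using pointwise_normalized_volume_antitone_general hI hHderiv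
    hHneg (fun t ht => (hρpos t ht).le) hρderiv hL1
end

section
/- Let t₀ > 0 and let F : [t₀,∞) → (0,∞) be continuous with limsup_{t→∞} t²·F(t) = ∞. Then there exists a sequence (tᵢ) with tᵢ → ∞ such that, setting Qᵢ := F(tᵢ), one has: (a) lim_{i→∞} Qᵢ·tᵢ² = ∞; and (b) for every A > 0, limsup_{i→∞} sup{ F(s)/Qᵢ : s ∈ [tᵢ − A·Qᵢ^{−1/2}, tᵢ + A·Qᵢ^{−1/2}] ∩ [t₀,∞) } ≤ 1. -/
open Set Filter

/-!
Point picking by an almost-maximum of `F x * (ℓ - dist x m) ^ 2` over a closed ball of radius `ℓ`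
about `m`. At an almost-maximum point `x` put `r = ℓ - dist x m`. Comparison with the centre shows
that `F x * r ^ 2` is nearly at least `F m * ℓ ^ 2`, so that when the latter is huge, `r` is a huge
multiple of the curvature scale `1 / √(F x)`. Within a small fraction of `r` from `x` the weight
hardly changes, so `F` there can hardly exceed `F x`.

For times, the balls `[m / 2, 3 * m / 2]` with `m ^ 2 * F m` huge go off to infinity with `m`.
-/

theorem exists_almost_max_of_bddAbove_image {α : Type*} {s : Set α} {g : α → ℝ} {a : α} {c : ℝ}
    (hg : BddAbove (g '' s)) (ha : a ∈ s) (hga : 0 < g a) (hc₀ : 0 ≤ c) (hc₁ : c < 1) :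
    ∃ x ∈ s, 0 < g x ∧ ∀ y ∈ s, c * g y ≤ g x := by
  have le_sup : ∀ y ∈ s, g y ≤ sSup (g '' s) := fun y hy => le_csSup hg (mem_image_of_mem g hy)
  have sup_pos : 0 < sSup (g '' s) := hga.trans_le (le_sup a ha)
  obtain ⟨_, ⟨x, hx, rfl⟩, hlt⟩ :=
    exists_lt_of_lt_csSup ⟨g a, mem_image_of_mem g ha⟩ (mul_lt_of_lt_one_left sup_pos hc₁)
  exact ⟨x, hx, (mul_nonneg hc₀ sup_pos.le).trans_lt hlt,
    fun y hy => (mul_le_mul_of_nonneg_left (le_sup y hy) hc₀).trans hlt.le⟩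

theorem exists_one_le_mul_one_sub_pow (k : ℕ) {ε : ℝ} (hε : 0 < ε) :
    ∃ δ ∈ Ioo (0 : ℝ) 1, 1 ≤ (1 + ε) * (1 - δ) ^ k := by
  have hcont : Continuous fun δ : ℝ => (1 + ε) * (1 - δ) ^ k := by fun_prop
  have hnear : ∀ᶠ δ in nhds (0 : ℝ), 1 < (1 + ε) * (1 - δ) ^ k :=
    hcont.continuousAt.eventually (lt_mem_nhds (by simpa using hε))
  obtain ⟨δ, hδ, hmem⟩ := ((hnear.filter_mono nhdsWithin_le_nhds).and
    (Ioo_mem_nhdsGT (zero_lt_one' ℝ))).exists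
  exact ⟨δ, hmem, hδ.le⟩

section PointPicking

open Metric

variable {X : Type*} [PseudoMetricSpace X] {F : X → ℝ} {m : X} {ℓ δ : ℝ}

theorem bddAbove_image_mul_sub_dist_sq (hbdd : BddAbove (F '' closedBall m ℓ)) :
    BddAbove ((fun x => F x * (ℓ - dist x m) ^ 2) '' closedBall m ℓ) := by
  obtain ⟨B, hB⟩ := hbdd
  refine ⟨|B| * ℓ ^ 2, ?_⟩
  rintro _ ⟨x, hx, rfl⟩
  have hFx : F x ≤ |B| := (hB (mem_image_of_mem F hx)).trans (le_abs_self B)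
  have hxℓ : 0 ≤ ℓ - dist x m := sub_nonneg.2 hx
  have hle : ℓ - dist x m ≤ ℓ := sub_le_self ℓ dist_nonneg
  dsimp only
  gcongr

theorem exists_almost_max_of_dist_le_mul (hbdd : BddAbove (F '' closedBall m ℓ)) (hℓ : 0 ≤ ℓ)
    (hpos : 0 < F m * ℓ ^ 2) (hδ₀ : 0 < δ) (hδ₁ : δ ≤ 1) :
    ∃ x r, 0 < r ∧ 0 < F x ∧ dist x m + r = ℓ ∧ (1 - δ) * (F m * ℓ ^ 2) ≤ F x * r ^ 2 ∧
      ∀ y, dist y x ≤ δ * r → (1 - δ) ^ 3 * F y ≤ F x := by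
  have hm : m ∈ closedBall m ℓ := mem_closedBall_self hℓ
  obtain ⟨x, hx, hgx, hmax⟩ := exists_almost_max_of_bddAbove_image (c := 1 - δ)
    (bddAbove_image_mul_sub_dist_sq hbdd) hm (by simpa using hpos) (by linarith) (by linarith)
  have hcentre := hmax m hm
  simp only [dist_self, sub_zero] at hcentre
  set r := ℓ - dist x m
  have hr_ne : r ≠ 0 := (pow_ne_zero_iff two_ne_zero).1 (right_ne_zero_of_mul hgx.ne')
  have hr₀ : 0 < r := (sub_nonneg.2 hx).lt_of_ne' hr_ne
  have hFx : 0 < F x := pos_of_mul_pos_left hgx (sq_nonneg r)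
  refine ⟨x, r, hr₀, hFx, by linarith, hcentre, fun y hy => ?_⟩
  have hδ : 0 ≤ 1 - δ := sub_nonneg.2 hδ₁
  rcases le_total (F y) 0 with hFy | hFy
  · exact (mul_nonpos_of_nonneg_of_nonpos (pow_nonneg hδ 3) hFy).trans hFx.le
  have hweight : (1 - δ) * r ≤ ℓ - dist y m := by linarith [dist_triangle y x m]
  have hy_mem : y ∈ closedBall m ℓ := sub_nonneg.1 ((mul_nonneg hδ hr₀.le).trans hweight)
  -- One factor `1 - δ` pays for the almost-maximum, the other two for the change of the weight.
  refine le_of_mul_le_mul_right ?_ (pow_pos hr₀ 2)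
  calc (1 - δ) ^ 3 * F y * r ^ 2 = (1 - δ) * (F y * ((1 - δ) * r) ^ 2) := by ring
    _ ≤ (1 - δ) * (F y * (ℓ - dist y m) ^ 2) := by gcongr
    _ ≤ F x * r ^ 2 := hmax y hy_mem

theorem exists_almost_max_of_dist_le_div_sqrt {A : ℝ} (hbdd : BddAbove (F '' closedBall m ℓ))
    (hℓ : 0 ≤ ℓ) (hA : 0 < A) (hδ : δ ∈ Ioo (0 : ℝ) 1)
    (hlarge : (A / δ) ^ 2 ≤ (1 - δ) * (F m * ℓ ^ 2)) :
    ∃ x r, 0 < r ∧ 0 < F x ∧ dist x m + r = ℓ ∧ A ^ 2 ≤ F x * r ^ 2 ∧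
      ∀ y, dist y x ≤ A / √(F x) → (1 - δ) ^ 3 * F y ≤ F x := by
  obtain ⟨hδ₀, hδ₁⟩ := hδ
  have hpos : 0 < F m * ℓ ^ 2 :=
    pos_of_mul_pos_right ((by positivity : 0 < (A / δ) ^ 2).trans_le hlarge) (by linarith)
  obtain ⟨x, r, hr, hFx, hdist, hcentre, hnear⟩ :=
    exists_almost_max_of_dist_le_mul hbdd hℓ hpos hδ₀ hδ₁.le
  have hscale : A / δ ≤ √(F x) * r := by
    rw [← Real.sqrt_sq hr.le, ← Real.sqrt_mul hFx.le]
    exact Real.le_sqrt_of_sq_le (hlarge.trans hcentre)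
  have hradius : A / √(F x) ≤ δ * r := by
    rw [div_le_iff₀ (Real.sqrt_pos.2 hFx)]
    linarith [(div_le_iff₀ hδ₀).1 hscale]
  refine ⟨x, r, hr, hFx, hdist, ?_, fun y hy => hnear y (hy.trans hradius)⟩
  calc A ^ 2 ≤ (A / δ) ^ 2 := by gcongr; exact le_div_self hA.le hδ₀ hδ₁.le
    _ ≤ F x * r ^ 2 := hlarge.trans hcentre

end PointPicking

section Times

variable {t₀ : ℝ} {F : ℝ → ℝ}

theorem exists_time_almost_max_on_Icc (hbdd : ∀ b, BddAbove (F '' Icc t₀ b))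
    (hunbdd : ∀ C : ℝ, ∃ᶠ t in atTop, C ≤ t ^ 2 * F t) {A ε : ℝ} (hA : 0 < A) (hε : 0 < ε) :
    ∃ τ, t₀ ≤ τ ∧ A ≤ τ ∧ 0 < F τ ∧ A ^ 2 ≤ F τ * τ ^ 2 ∧
      ∀ s ∈ Icc (τ - A / √(F τ)) (τ + A / √(F τ)), F s ≤ (1 + ε) * F τ := by
  obtain ⟨δ, hδ, hδε⟩ := exists_one_le_mul_one_sub_pow 3 hε
  have hδ₁ : 0 < 1 - δ := sub_pos.2 hδ.2
  obtain ⟨m, hm, hmt₀, hmA⟩ := ((hunbdd ((A / δ) ^ 2 / (1 - δ) * 4)).and_eventually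
    ((eventually_ge_atTop (2 * t₀)).and (eventually_ge_atTop (2 * A)))).exists
  have hball : BddAbove (F '' Metric.closedBall m (m / 2)) := by
    refine (hbdd (m + m / 2)).mono (image_mono ?_)
    rw [Real.closedBall_eq_Icc]
    exact Icc_subset_Icc_left (by linarith)
  have hlarge : (A / δ) ^ 2 ≤ (1 - δ) * (F m * (m / 2) ^ 2) := by
    rw [← div_le_iff₀' hδ₁]
    linarith
  obtain ⟨τ, r, hr, hFτ, hdist, hAr, hnear⟩ :=
    exists_almost_max_of_dist_le_div_sqrt hball (by linarith) hA hδ hlarge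
  have hτ : m / 2 + r ≤ τ := by linarith [neg_abs_le (τ - m), Real.dist_eq τ m]
  refine ⟨τ, by linarith, by linarith, hFτ, hAr.trans ?_, fun s hs => ?_⟩
  · gcongr
    linarith
  rcases le_total (F s) 0 with hFs | hFs
  · exact hFs.trans (by positivity)
  rw [← Real.closedBall_eq_Icc] at hs
  calc F s ≤ (1 + ε) * (1 - δ) ^ 3 * F s := le_mul_of_one_le_left hFs hδε
    _ = (1 + ε) * ((1 - δ) ^ 3 * F s) := mul_assoc _ _ _
    _ ≤ (1 + ε) * F τ := by gcongr; exact hnear s hs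

theorem typeIIb_point_picking_general (hbdd : ∀ b, BddAbove (F '' Icc t₀ b))
    (hunbdd : ∀ C : ℝ, ∃ᶠ t in atTop, C ≤ t ^ 2 * F t) :
    ∃ t : ℕ → ℝ, (∀ i, t₀ ≤ t i) ∧ Tendsto t atTop atTop ∧
      Tendsto (fun i => F (t i) * (t i) ^ 2) atTop atTop ∧
      ∀ A > (0 : ℝ), ∀ ε > (0 : ℝ), ∀ᶠ i in atTop,
        ∀ s ∈ Icc (t i - A / √(F (t i))) (t i + A / √(F (t i))) ∩ Ici t₀,
          F s / F (t i) ≤ 1 + ε := by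
  have hn : Tendsto (fun n : ℕ => (n : ℝ) + 1) atTop atTop :=
    tendsto_atTop_add_const_right _ _ tendsto_natCast_atTop_atTop
  choose t ht₀ hle hFt hsq hnear using fun n : ℕ =>
    exists_time_almost_max_on_Icc hbdd hunbdd n.cast_add_one_pos
      (Nat.one_div_pos_of_nat (α := ℝ) (n := n))
  refine ⟨t, ht₀, tendsto_atTop_mono hle hn,
    tendsto_atTop_mono hsq ((tendsto_pow_atTop two_ne_zero).comp hn), fun A _ ε hε => ?_⟩
  filter_upwards [hn.eventually_ge_atTop A,
    tendsto_one_div_add_atTop_nhds_zero_nat.eventually_le_const hε] with i hA hi s ⟨hs, _⟩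
  rw [div_le_iff₀ (hFt i)]
  calc F s ≤ (1 + 1 / (i + 1)) * F (t i) :=
        hnear i s (Icc_subset_Icc (by gcongr) (by gcongr) hs)
    _ ≤ (1 + ε) * F (t i) := by gcongr; exact (hFt i).le

end Times

/-- Type-IIb point-picking lemma underlying Proposition 3.1 of Lott, "Collapsing in the
Einstein flow" (after Chow–Lu–Ni): if `F > 0` is continuous on `[t₀,∞)` with
`limsup_{t→∞} t²F(t) = ∞`, then there are times `tᵢ → ∞` with `Qᵢtᵢ² → ∞` (`Qᵢ = F(tᵢ)`)
such that for every `A > 0`, `limsup_i sup{F(s)/Qᵢ : s ∈ [tᵢ − AQᵢ^{-1/2}, tᵢ + AQᵢ^{-1/2}] ∩ [t₀,∞)} ≤ 1`,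
the latter stated as: for all `ε > 0`, eventually `F(s)/Qᵢ ≤ 1 + ε` on that interval. -/
theorem typeIIb_point_picking
    (t₀ : ℝ) (ht₀ : 0 < t₀) (F : ℝ → ℝ)
    (hcont : ContinuousOn F (Set.Ici t₀))
    (hpos : ∀ t ∈ Set.Ici t₀, 0 < F t)
    (hunbdd : ∀ C : ℝ, ∃ᶠ t in atTop, C ≤ t ^ 2 * F t) :
    ∃ t : ℕ → ℝ, (∀ i, t₀ ≤ t i) ∧ Tendsto t atTop atTop ∧
      Tendsto (fun i => F (t i) * (t i) ^ 2) atTop atTop ∧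
      ∀ A > (0 : ℝ), ∀ ε > (0 : ℝ), ∀ᶠ i in atTop,
        ∀ s ∈ Set.Icc (t i - A / Real.sqrt (F (t i))) (t i + A / Real.sqrt (F (t i))) ∩
            Set.Ici t₀,
          F s / F (t i) ≤ 1 + ε :=
  typeIIb_point_picking_general
    (fun _ => (isCompact_Icc.image_of_continuousOn (hcont.mono Icc_subset_Ici_self)).bddAbove)
    hunbdd
end
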